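/- The Tchebyshev transform of the second kind is a coalgebra homomorphism: for every u ∈ ℤ⟨a,b⟩, Δ(U(u)) = Σ_u U(u_(1)) ⊗ U(u_(2)); equivalently, Δ ∘ U = (U ⊗ U) ∘ Δ. -/

import Mathlib

open scoped TensorProduct

noncomputable section

namespace Tcheb

/-! ### The algebra `R⟨a,b⟩` of ab-polynomials -/

/-- Words in the two noncommuting letters `a` (encoded `true`) and `b` (encoded `false`). -/
abbrev ABWord : Type := FreeMonoid Bool

/-- The ring `R⟨a,b⟩` of polynomials in two noncommuting variables `a` and `b`. -/
abbrev AB (R : Type) [CommRing R] : Type := MonoidAlgebra R ABWord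

variable (R : Type) [CommRing R]

/-- The ab-monomial corresponding to a word. -/
def word (l : List Bool) : AB R := MonoidAlgebra.of R ABWord (FreeMonoid.ofList l)

/-- The variable `a`. -/
def av : AB R := word R [true]
/-- The variable `b`. -/
def bv : AB R := word R [false]
/-- `c = a + b`. -/
def cv : AB R := av R + bv R
/-- `d = ab + ba`. -/
def dv : AB R := av R * bv R + bv R * av R
/-- `a - b`. -/
def ev : AB R := av R - bv R

/-- The linear map defined by prescribing values on the basis of ab-monomials. -/
def onBasis {M : Type} [AddCommMonoid M] [Module R M] (f : List Bool → M) :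
    AB R →ₗ[R] M :=
  (Finsupp.lift M R ABWord fun w => f (FreeMonoid.toList w)) ∘ₗ
    (MonoidAlgebra.coeffLinearEquiv R).toLinearMap

/-- The algebra map `A` with `A(a) = 1`, `A(b) = 0`. -/
def Amap : AB R →ₐ[R] R :=
  MonoidAlgebra.lift R R ABWord (FreeMonoid.lift fun x => if x then (1 : R) else 0)

/-- The coproduct on `R⟨a,b⟩`: on an ab-monomial `u₁ ⋯ u_k` it is
`Σ_{i=1}^k u₁ ⋯ u_{i-1} ⊗ u_{i+1} ⋯ u_k`. -/
def Delta : AB R →ₗ[R] AB R ⊗[R] AB R :=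
  onBasis R fun w => ∑ i ∈ Finset.range w.length,
    word R (w.take i) ⊗ₜ[R] word R (w.drop (i + 1))

/-- The linear map `C(u) = 2·A(u) + Σ_u A(u₍₁₎)·A(u₍₂₎)`. -/
def Cmap : AB R →ₗ[R] R :=
  2 • (Amap R).toLinearMap +
    (LinearMap.mul' R R ∘ₗ
      TensorProduct.map (Amap R).toLinearMap (Amap R).toLinearMap) ∘ₗ Delta R

/-- `κ(u) = A(u)·(a-b)^(deg u)` on homogeneous `u`, extended linearly. -/
def kappa : AB R →ₗ[R] AB R :=
  onBasis R fun w => Amap R (word R w) • ev R ^ w.length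

/-- `ν(u) = C(u)·(a-b)^(deg u)` on homogeneous `u`, extended linearly. -/
def nuMap : AB R →ₗ[R] AB R :=
  onBasis R fun w => Cmap R (word R w) • ev R ^ w.length

end Tcheb

namespace Tcheb

/-- Cutting a word into the list of segments between the (sorted) cut positions. -/
def segments : List Bool → List ℕ → List (List Bool)
  | l, [] => [l]
  | l, i :: rest => l.take i :: segments (l.drop (i + 1)) (rest.map fun j => j - (i + 1))
  termination_by _ cuts => cuts.length
  decreasing_by simp

variable (R : Type) [CommRing R]

/-- For segments `[s₁, …, s_k]` this is `ν(s₁)·b·ν(s₂)·b ⋯ b·ν(s_{k-1})·b·κ(s_k)`. -/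
def chainProd : List (List Bool) → AB R
  | [] => 1
  | [s] => kappa R (word R s)
  | s :: rest => nuMap R (word R s) * bv R * chainProd rest

/-- The Tchebyshev transform (of the first kind) on ab-polynomials:
`T(u) = Σ_{k ≥ 1} Σ_u ν(u₍₁₎)·b·ν(u₍₂₎)·b ⋯ b·ν(u₍ₖ₋₁₎)·b·κ(u₍ₖ₎)`,
where the inner sum is over the `k`-fold coproduct.  On the ab-monomial basis this
is the sum, over all sets of positions of deleted letters, of the corresponding
products over the resulting segments. -/
def Tmap : AB R →ₗ[R] AB R :=
  onBasis R fun w => ∑ S : Finset (Fin w.length),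
    chainProd R (segments w ((S.sort (· ≤ ·)).map Fin.val))

/-- The `ω` map on a word: replace each occurrence of `ab` by `2d` and all
remaining letters by `c`. -/
def omegaWord : List Bool → AB R
  | [] => 1
  | true :: false :: rest => (2 * dv R) * omegaWord rest
  | _ :: rest => cv R * omegaWord rest

/-- The `ω` map of Billera–Ehrenborg–Readdy. -/
def omegaMap : AB R →ₗ[R] AB R := onBasis R fun w => omegaWord R w

/-- The reversal involution `u ↦ u*` of ab-polynomials. -/
def revMap : AB R →ₗ[R] AB R := onBasis R fun w => word R w.reverse

/-- `H*(1) = 0` and `H*(u·a) = H*(u·b) = u`. -/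
def Hstar : AB R →ₗ[R] AB R :=
  onBasis R fun w => if w = [] then 0 else word R w.dropLast

/-- The Tchebyshev transform of the second kind `U(u) = H*(T(u·a))`. -/
def Umap : AB R →ₗ[R] AB R := Hstar R ∘ₗ Tmap R ∘ₗ LinearMap.mulRight R (av R)

/-- `σ(u) = Σ_u κ(u₍₁₎)·b·T(u₍₂₎)`. -/
def sigmaMap : AB R →ₗ[R] AB R :=
  LinearMap.mul' R (AB R) ∘ₗ
    TensorProduct.map (LinearMap.mulRight R (bv R) ∘ₗ kappa R) (Tmap R) ∘ₗ Delta R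

/-! ### Graded posets and the ab-index -/

/-- `rk` is a rank function for a bounded poset: `rk ⊥ = 0` and covers raise rank by one. -/
def IsRankFun (α : Type) [PartialOrder α] [OrderBot α] (rk : α → ℕ) : Prop :=
  rk ⊥ = 0 ∧ ∀ x y : α, x ⋖ y → rk y = rk x + 1

/-- `f` lists the elements of a chain in increasing order with respect to the
strict order relation `lt`. -/
def IsStrictChain {α : Type} (lt : α → α → Prop) {n : ℕ} (f : Fin (n + 1) → α) : Prop :=
  ∀ i j : Fin (n + 1), i < j → lt (f i) (f j)

/-- The weight of a chain `x₀ < x₁ < ⋯ < x_k`: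
`(a-b)^{ρ(x₀,x₁)-1}·b·(a-b)^{ρ(x₁,x₂)-1}·b ⋯ b·(a-b)^{ρ(x_{k-1},x_k)-1}`. -/
def chainWt {α : Type} (rk : α → ℕ) {n : ℕ} (f : Fin (n + 1) → α) : AB R :=
  (List.intersperse (bv R)
    (List.ofFn fun i : Fin n => ev R ^ (rk (f i.succ) - rk (f i.castSucc) - 1))).prod

/-- The ab-index `Ψ` of the graded poset with strict order relation `lt`, rank
function `rk`, minimum `b` and maximum `t`: the sum of the weights of all chains
from `b` to `t`. -/
def PsiRel {α : Type} (lt : α → α → Prop) (rk : α → ℕ) (b t : α) : AB R :=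
  ∑ᶠ (n : ℕ), ∑ᶠ (f : Fin (n + 1) → α)
    (_ : IsStrictChain lt f ∧ f 0 = b ∧ f (Fin.last n) = t), chainWt R rk f

end Tcheb

namespace Tcheb

/-! ### The Tchebyshev transform of a graded poset -/

section TPoset

variable (α : Type) [PartialOrder α] [BoundedOrder α]

/-- The elements `[x,y]` of the Tchebyshev transform: intervals of `P ∪ {-1̂}`,
i.e. pairs `(x,y)` with `x ∈ P ∪ {-1̂}`, `y ∈ P` and `x < y`. -/
def TPel : Type := {p : WithBot α × α // p.1 < (p.2 : WithBot α)}

/-- The underlying set of the Tchebyshev transform `T(P)`: the intervals `[x,y]`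
together with a new maximum element (`none`). -/
def TP : Type := Option (TPel α)

/-- The cover relation of the Tchebyshev transform `T(P)`:
`[x,y] ⋖ [y,w]` and `[x,y] ⋖ [x,w]` whenever `y ⋖ w` in `P`, and `[x,1̂] ⋖ 1̂_{T(P)}`. -/
inductive TPcov : TP α → TP α → Prop
  | up {x : WithBot α} {y w : α} (h1 : x < (y : WithBot α))
      (h2 : (y : WithBot α) < (w : WithBot α)) (hc : y ⋖ w) :
      TPcov (some ⟨(x, y), h1⟩) (some ⟨((y : WithBot α), w), h2⟩)
  | same {x : WithBot α} {y w : α} (h1 : x < (y : WithBot α))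
      (h2 : x < (w : WithBot α)) (hc : y ⋖ w) :
      TPcov (some ⟨(x, y), h1⟩) (some ⟨(x, w), h2⟩)
  | top {x : WithBot α} (h1 : x < ((⊤ : α) : WithBot α)) :
      TPcov (some ⟨(x, (⊤ : α)), h1⟩) none

/-- The strict order relation of `T(P)`, generated by the cover relation. -/
def TPlt : TP α → TP α → Prop := Relation.TransGen (TPcov α)

/-- The order relation of `T(P)`, generated by the cover relation. -/
def TPle : TP α → TP α → Prop := Relation.ReflTransGen (TPcov α)

/-- The minimum element `[-1̂, 0̂]` of `T(P)`. -/
def TPbot : TP α := some ⟨((⊥ : WithBot α), (⊥ : α)), WithBot.bot_lt_coe _⟩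

/-- The maximum element `1̂_{T(P)}` of `T(P)`. -/
def TPtop : TP α := none

/-- The rank function of `T(P)`: `ρ([x,y]) = ρ(y)` and `ρ(1̂_{T(P)}) = ρ(P) + 1`. -/
def TPrk (rk : α → ℕ) : TP α → ℕ
  | some p => rk p.1.2
  | none => rk (⊤ : α) + 1

theorem TPbot_ne_TPtop : TPbot α ≠ TPtop α := by exact Option.some_ne_none _

/-- The map `z : T(P) → P ∪ {2̂}` with `z([x,y]) = y` and `z(1̂_{T(P)}) = 2̂`. -/
def zmap : TP α → WithTop α
  | some p => (p.1.2 : WithTop α)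
  | none => ⊤

/-- The number of elements of the interval `[u,v]` of `P`, for `u, v ∈ P ∪ {2̂}`. -/
def intervalCard (u v : WithTop α) : ℕ :=
  Set.ncard {t : α | u ≤ (t : WithTop α) ∧ (t : WithTop α) ≤ v}

end TPoset

/-! ### The dual diamond product -/

/-- The strict order relation of the dual diamond product
`P ◇* Q = ((P ∖ {1̂}) × (Q ∖ {1̂})) ∪ {1̂}` (with `none` the new maximum), built from
the order relations `leA, ltA` and `leB, ltB` of the two factors. -/
def dsLT {A B : Type} (leA ltA : A → A → Prop) (leB ltB : B → B → Prop) :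
    Option (A × B) → Option (A × B) → Prop
  | some p, some q => (leA p.1 q.1 ∧ leB p.2 q.2) ∧ (ltA p.1 q.1 ∨ ltB p.2 q.2)
  | some _, none => True
  | none, _ => False

/-! ### EL-labelings -/

/-- The list of edge labels along a chain (given as a list of poset elements). -/
def labelsList {α Λ : Type} (lam : α → α → Λ) (l : List α) : List Λ :=
  (l.zip l.tail).map fun p => lam p.1 p.2

/-- `l` is a maximal (saturated) chain of the interval `[x,y]` with respect to the
cover relation `cov`: it runs from `x` to `y` and every step is a cover. -/
def IsMaxChainList {α : Type} (cov : α → α → Prop) (x y : α) (l : List α) : Prop :=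
  l.head? = some x ∧ l.getLast? = some y ∧ l.Chain' cov

/-- An `EL`-labeling of the poset whose cover relation is `cov`, with labels in the
linearly ordered set `(Λ, lle, llt)`: every interval has a unique rising maximal
chain, which moreover is lexicographically least among all maximal chains of the
interval. -/
def IsELLabeling (α Λ : Type) (lle llt : Λ → Λ → Prop)
    (cov : α → α → Prop) (lam : α → α → Λ) : Prop :=
  ∀ x y : α, Relation.ReflTransGen cov x y →
    ∃ l : List α, (IsMaxChainList cov x y l ∧ (labelsList lam l).Chain' lle) ∧
      (∀ l' : List α, IsMaxChainList cov x y l' →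
        (labelsList lam l').Chain' lle → l' = l) ∧
      (∀ l' : List α, IsMaxChainList cov x y l' →
        labelsList lam l = labelsList lam l' ∨
          List.Lex llt (labelsList lam l) (labelsList lam l'))

/-! ### Eulerian posets -/

/-- A graded poset is Eulerian if every nontrivial interval `[x,y]` has the
same number of elements of even rank as of odd rank. -/
def IsEulerian (α : Type) [PartialOrder α] (rk : α → ℕ) : Prop :=
  ∀ x y : α, x < y →
    Set.ncard {z : α | x ≤ z ∧ z ≤ y ∧ Even (rk z)} =
      Set.ncard {z : α | x ≤ z ∧ z ≤ y ∧ ¬ Even (rk z)}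

/-! ### The face lattice of the crosspolytope -/

/-- A face of the `n`-dimensional crosspolytope: a partial sign vector, i.e. the
pair `(S, ε)` of a subset `S ⊆ {1,…,n}` (the set of coordinates where the function
takes a value `some`) together with a sign function `ε` on `S`. -/
def CrossEl (n : ℕ) : Type := Fin n → Option Bool

/-- `(S,ε) ≤ (T,δ)` iff `S ⊆ T` and `δ` restricted to `S` is `ε`. -/
instance (n : ℕ) : PartialOrder (CrossEl n) where
  le f g := ∀ i s, f i = some s → g i = some s
  le_refl f i s h := h
  le_trans f g h fg gh i s hi := gh i s (fg i s hi)
  le_antisymm f g fg gf := by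
    funext i
    cases hf : f i with
    | some s => exact (fg i s hf).symm
    | none =>
      cases hg : g i with
      | some s => exact absurd (gf i s hg) (by simp [hf])
      | none => rfl

/-- The face lattice of the `n`-dimensional crosspolytope: all partial sign
vectors together with a new maximum element. -/
abbrev Cross (n : ℕ) : Type := WithTop (CrossEl n)

/-- The rank function of the face lattice of the crosspolytope:
`ρ(S,ε) = |S|` and the maximum has rank `n + 1`. -/
def crossRk (n : ℕ) : Cross n → ℕ
  | none => n + 1
  | some f => (Finset.univ.filter fun i : Fin n => (f i).isSome).card

/-- The minimal element (the empty face) of the crosspolytope face lattice. -/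
def crossBot (n : ℕ) : Cross n := WithTop.some (fun _ => none)

/-- The maximal element of the crosspolytope face lattice. -/
def crossTop (n : ℕ) : Cross n := ⊤

/-! ### Quasisymmetric functions -/

/-- The monomial quasisymmetric function `M_{(p₁,…,p_k)}`, as a formal power
series in the countably many commuting variables `t₁, t₂, …` (indexed by `ℕ`). -/
def MQ (R : Type) [CommRing R] (ps : List ℕ) : MvPowerSeries ℕ R :=
  fun m => if ((m.support.sort (· ≤ ·)).map fun i => m i) = ps then 1 else 0

/-- The `t`-part of a monomial in the variables `s` (index `none`) and
`t₁, t₂, …` (indices `some i`). -/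
def tpart (m : Option ℕ →₀ ℕ) : ℕ →₀ ℕ :=
  Finsupp.comapDomain some m (Option.some_injective ℕ).injOn

/-- The type B monomial quasisymmetric function `s^p · M_{(p₁,…,p_k)}`, a formal
power series in the variables `s` (index `none`) and `t₁, t₂, …` (indices `some i`). -/
def MB (R : Type) [CommRing R] (p : ℕ) (ps : List ℕ) : MvPowerSeries (Option ℕ) R :=
  fun m => if m none = p ∧
      (((tpart m).support.sort (· ≤ ·)).map fun i => tpart m i) = ps then 1 else 0

/-- The quasisymmetric function `F(P)` of the graded poset with strict order
relation `lt`, rank function `rk`, minimum `b` and maximum `t`: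
`F(P) = Σ_c M_{(ρ(x₀,x₁),…,ρ(x_{k-1},x_k))}` over all chains `c` from `b` to `t`. -/
def FQ (R : Type) [CommRing R] {α : Type} (lt : α → α → Prop) (rk : α → ℕ)
    (b t : α) : MvPowerSeries ℕ R :=
  ∑ᶠ (n : ℕ), ∑ᶠ (f : Fin (n + 1) → α)
    (_ : IsStrictChain lt f ∧ f 0 = b ∧ f (Fin.last n) = t),
    MQ R (List.ofFn fun i : Fin n => rk (f i.succ) - rk (f i.castSucc))

/-- The type B quasisymmetric function `F_B(P) = Σ_{0̂ < x ≤ 1̂} s^{ρ(x)-1}·F([x,1̂])`,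
written as a sum over all chains `0̂ < x₀ < x₁ < ⋯ < x_k = 1̂` of
`s^{ρ(x₀)-1}·M_{(ρ(x₀,x₁),…,ρ(x_{k-1},x_k))}`. -/
def FB (R : Type) [CommRing R] {α : Type} (lt : α → α → Prop) (rk : α → ℕ)
    (b t : α) : MvPowerSeries (Option ℕ) R :=
  ∑ᶠ (n : ℕ), ∑ᶠ (f : Fin (n + 1) → α)
    (_ : IsStrictChain lt f ∧ lt b (f 0) ∧ f (Fin.last n) = t),
    MB R (rk (f 0) - 1) (List.ofFn fun i : Fin n => rk (f i.succ) - rk (f i.castSucc))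

/-! ### Characters and the chain maps -/

/-- A character on `k⟨a,b⟩`: a linear functional which is multiplicative with
respect to Cartesian products of graded posets (of rank at least 1). -/
def IsCharacter (k : Type) [Field k] (G : AB k →ₗ[k] k) : Prop :=
  ∀ (α β : Type) [Fintype α] [Fintype β] [PartialOrder α] [PartialOrder β]
    [BoundedOrder α] [BoundedOrder β], ∀ (rkα : α → ℕ) (rkβ : β → ℕ),
    IsRankFun α rkα → IsRankFun β rkβ → 1 ≤ rkα ⊤ → 1 ≤ rkβ ⊤ →
    G (PsiRel k (· < ·) (fun p : α × β => rkα p.1 + rkβ p.2)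
        ((⊥ : α), (⊥ : β)) ((⊤ : α), (⊤ : β))) =
      G (PsiRel k (· < ·) rkα ⊥ ⊤) * G (PsiRel k (· < ·) rkβ ⊥ ⊤)

/-- The quasisymmetric function image `g̃F(P)` of the chain map of the second kind:
`Σ_c G(Ψ([x₀,x₁])) ⋯ G(Ψ([x_{k-1},x_k])) · M_{(ρ(x₀,x₁),…,ρ(x_{k-1},x_k))}`,
summed over all chains `c = {b = x₀ < ⋯ < x_k = t}`. -/
def gtF (k : Type) [Field k] (G : AB k →ₗ[k] k) {α : Type} (lt : α → α → Prop)
    (rk : α → ℕ) (b t : α) : MvPowerSeries ℕ k :=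
  ∑ᶠ (n : ℕ), ∑ᶠ (f : Fin (n + 1) → α)
    (_ : IsStrictChain lt f ∧ f 0 = b ∧ f (Fin.last n) = t),
    (∏ i : Fin n, G (PsiRel k lt rk (f i.castSucc) (f i.succ))) •
      MQ k (List.ofFn fun i : Fin n => rk (f i.succ) - rk (f i.castSucc))

/-- The type B quasisymmetric function image `gF_B(P) = Σ_{0̂ < x ≤ 1̂}
s^{ρ(x)-1}·g̃F([x,1̂])` of the chain map of the first kind, written as a sum over
all chains `0̂ < x₀ < ⋯ < x_k = 1̂`. -/
def gFB (k : Type) [Field k] (G : AB k →ₗ[k] k) {α : Type} (lt : α → α → Prop)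
    (rk : α → ℕ) (b t : α) : MvPowerSeries (Option ℕ) k :=
  ∑ᶠ (n : ℕ), ∑ᶠ (f : Fin (n + 1) → α)
    (_ : IsStrictChain lt f ∧ lt b (f 0) ∧ f (Fin.last n) = t),
    (∏ i : Fin n, G (PsiRel k lt rk (f i.castSucc) (f i.succ))) •
      MB k (rk (f 0) - 1) (List.ofFn fun i : Fin n => rk (f i.succ) - rk (f i.castSucc))

/-- The space of homogeneous ab-polynomials of degree `n`. -/
def ABhomog (k : Type) [Field k] (n : ℕ) : Submodule k (AB k) :=
  Submodule.span k {x : AB k | ∃ w : List Bool, w.length = n ∧ x = word k w}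

/-! Write `f ⋆ g` for the map `u ↦ ∑ f(u₍₁₎) · b · g(u₍₂₎)`. Splitting off the first cut in the
definition of `T` gives `T = κ + ν ⋆ T`, and applying `H*` to `T(u·a)` turns this into
`U = ν + ν ⋆ U`. As `Δ` is a derivation that kills the image of `ν` and sends `b` to `1 ⊗ 1`, this
yields `Δ ∘ U = (ν ⊗ U) ∘ Δ + ν ⋆ (Δ ∘ U)`. Coassociativity shows that `(U ⊗ U) ∘ Δ` satisfies the
same equation, and such an equation has only one solution because `Δ` shortens words. -/

section CoalgebraHom

variable {R : Type} [CommRing R]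

lemma onBasis_word {M : Type} [AddCommMonoid M] [Module R M] (f : List Bool → M)
    (w : List Bool) : onBasis R f (word R w) = f w := by
  simp [onBasis, word]

lemma word_nil : word R [] = 1 := by
  simp [word, MonoidAlgebra.one_def]

lemma word_mul_word (v w : List Bool) : word R v * word R w = word R (v ++ w) := by
  simp [word, MonoidAlgebra.single_mul_single]

lemma word_induction {P : AB R → Prop} (x : AB R) (word : ∀ w, P (word R w))
    (add : ∀ x y, P x → P y → P (x + y)) (smul : ∀ (r : R) x, P x → P (r • x)) : P x :=
  MonoidAlgebra.induction_on x (fun w => word w.toList) add smul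

lemma linearMap_ext_word {M : Type*} [AddCommMonoid M] [Module R M] {f g : AB R →ₗ[R] M}
    (h : ∀ w, f (word R w) = g (word R w)) : f = g := by
  refine LinearMap.ext fun x => ?_
  induction x using word_induction with
  | word w => exact h w
  | add x y hx hy => rw [map_add, map_add, hx, hy]
  | smul r x hx => rw [map_smul, map_smul, hx]

lemma Delta_word (w : List Bool) : Delta R (word R w) =
    ∑ i ∈ Finset.range w.length, word R (w.take i) ⊗ₜ[R] word R (w.drop (i + 1)) :=
  onBasis_word _ _

lemma Delta_one : Delta R 1 = 0 := by
  simp [← word_nil, Delta_word]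

lemma Delta_letter (x : Bool) : Delta R (word R [x]) = 1 ⊗ₜ 1 := by
  simp [Delta_word, word_nil]

lemma Delta_word_mul_word (v w : List Bool) : Delta R (word R v * word R w) =
    (LinearMap.mulRight R (word R w)).lTensor (AB R) (Delta R (word R v)) +
      word R v • Delta R (word R w) := by
  simp only [word_mul_word, Delta_word, List.length_append, Finset.sum_range_add, map_sum,
    Finset.smul_sum, LinearMap.lTensor_tmul, LinearMap.mulRight_apply, TensorProduct.smul_tmul',
    smul_eq_mul]
  congr 1 <;> refine Finset.sum_congr rfl fun i hi => ?_
  · have := Finset.mem_range.1 hi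
    rw [List.take_append_of_le_length (by omega), List.drop_append_of_le_length (by omega)]
  · rw [List.take_length_add_append, add_assoc, List.drop_length_add_append]

lemma Delta_mul (x y : AB R) : Delta R (x * y) =
    (LinearMap.mulRight R y).lTensor (AB R) (Delta R x) + x • Delta R y := by
  induction x using word_induction with
  | add x₁ x₂ h₁ h₂ =>
    simp only [add_mul, map_add, add_smul, h₁, h₂]
    abel
  | smul r x h => simp only [smul_mul_assoc, map_smul, h, smul_add, smul_assoc]
  | word v =>
    induction y using word_induction with
    | add y₁ y₂ h₁ h₂ =>
      have mulRight_add : LinearMap.mulRight R (y₁ + y₂) =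
          LinearMap.mulRight R y₁ + LinearMap.mulRight R y₂ := map_add (LinearMap.mul R _).flip _ _
      simp only [mul_add, map_add, h₁, h₂, mulRight_add, LinearMap.lTensor_add,
        LinearMap.add_apply, smul_add]
      abel
    | smul r y h =>
      have mulRight_smul : LinearMap.mulRight R (r • y) = r • LinearMap.mulRight R y :=
        map_smul (LinearMap.mul R _).flip _ _
      simp only [mul_smul_comm, map_smul, h, mulRight_smul, LinearMap.lTensor_smul,
        LinearMap.smul_apply, smul_add, smul_comm r]
    | word w => exact Delta_word_mul_word v w

lemma Delta_letter_mul (x : Bool) (u : AB R) :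
    Delta R (word R [x] * u) = 1 ⊗ₜ u + word R [x] • Delta R u := by
  simp [Delta_mul, Delta_letter]

lemma Delta_mul_letter (u : AB R) (x : Bool) : Delta R (u * word R [x]) =
    (LinearMap.mulRight R (word R [x])).lTensor (AB R) (Delta R u) + u ⊗ₜ 1 := by
  simp [Delta_mul, Delta_letter, TensorProduct.smul_tmul']

lemma assoc_rTensor_Delta_letter_smul (x : Bool) (t : AB R ⊗[R] AB R) :
    TensorProduct.assoc R _ _ _ ((Delta R).rTensor (AB R) (word R [x] • t)) =
      1 ⊗ₜ t + word R [x] • TensorProduct.assoc R _ _ _ ((Delta R).rTensor (AB R) t) := by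
  have assoc_smul (s : AB R ⊗[R] AB R) (q : AB R) :
      TensorProduct.assoc R _ _ _ ((word R [x] • s) ⊗ₜ[R] q) =
        word R [x] • TensorProduct.assoc R _ _ _ (s ⊗ₜ[R] q) := by
    induction s with
    | zero => simp
    | add s₁ s₂ h₁ h₂ => simp only [smul_add, TensorProduct.add_tmul, map_add, h₁, h₂]
    | tmul p₁ p₂ => simp [TensorProduct.smul_tmul']
  induction t with
  | zero => simp
  | add t₁ t₂ h₁ h₂ =>
    simp only [smul_add, map_add, h₁, h₂, TensorProduct.tmul_add]
    abel
  | tmul p q =>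
    simp [TensorProduct.smul_tmul', Delta_letter_mul, TensorProduct.add_tmul, assoc_smul]

lemma lTensor_smul_apply {A M N : Type*} [Semiring A] [Algebra R A] [AddCommMonoid M] [Module R M]
    [AddCommMonoid N] [Module R N] (f : M →ₗ[R] N) (x : A) (t : A ⊗[R] M) :
    f.lTensor A (x • t) = x • f.lTensor A t :=
  map_smul (TensorProduct.AlgebraTensorModule.lTensor A A f) x t

lemma Delta_coassoc :
    (TensorProduct.assoc R (AB R) (AB R) (AB R)).toLinearMap ∘ₗ (Delta R).rTensor (AB R) ∘ₗ
      Delta R = (Delta R).lTensor (AB R) ∘ₗ Delta R := by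
  refine linearMap_ext_word fun w => ?_
  simp only [LinearMap.comp_apply, LinearEquiv.coe_coe]
  induction w with
  | nil => simp [word_nil, Delta_one]
  | cons x w ih =>
    rw [← List.singleton_append, ← word_mul_word, Delta_letter_mul]
    simp only [map_add, LinearMap.rTensor_tmul, LinearMap.lTensor_tmul, Delta_one,
      TensorProduct.zero_tmul, zero_add, assoc_rTensor_Delta_letter_smul,
      lTensor_smul_apply, ih]

section bConv

variable {M : Type*} [AddCommMonoid M] [Module R M] [Module (AB R) M] [IsScalarTower R (AB R) M]

/-- The action `u ⊗ m ↦ (f(u) · b) • m` on a left `R⟨a,b⟩`-module, from which the convolution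
`bConv` is built. -/
def bAct (M : Type*) [AddCommMonoid M] [Module R M] [Module (AB R) M] [IsScalarTower R (AB R) M]
    (f : AB R →ₗ[R] AB R) : AB R ⊗[R] M →ₗ[R] M :=
  TensorProduct.lift ((Algebra.lsmul R R M).toLinearMap ∘ₗ LinearMap.mulRight R (bv R) ∘ₗ f)

lemma bAct_tmul (f : AB R →ₗ[R] AB R) (u : AB R) (m : M) :
    bAct M f (u ⊗ₜ m) = (f u * bv R) • m :=
  rfl

/-- The convolution `f ⋆ g : u ↦ ∑ f(u₍₁₎) · b · g(u₍₂₎)` of linear maps with respect to the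
coproduct `Δ`. The values of `g` may lie in any left `R⟨a,b⟩`-module, so that `g` can be an
endomorphism of `R⟨a,b⟩` as well as a map into `R⟨a,b⟩ ⊗ R⟨a,b⟩`, which is a module through its
left factor. -/
def bConv (f : AB R →ₗ[R] AB R) (g : AB R →ₗ[R] M) : AB R →ₗ[R] M :=
  bAct M f ∘ₗ g.lTensor (AB R) ∘ₗ Delta R

lemma bConv_word (f : AB R →ₗ[R] AB R) (g : AB R →ₗ[R] M) (w : List Bool) :
    bConv f g (word R w) = ∑ i ∈ Finset.range w.length,
      (f (word R (w.take i)) * bv R) • g (word R (w.drop (i + 1))) := by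
  simp [bConv, Delta_word, bAct_tmul]

lemma eq_of_eq_add_bConv {f : AB R →ₗ[R] AB R} {c X Y : AB R →ₗ[R] M}
    (hX : X = c + bConv f X) (hY : Y = c + bConv f Y) : X = Y := by
  refine linearMap_ext_word fun w => ?_
  induction hn : w.length using Nat.strong_induction_on generalizing w with
  | _ n ih =>
    subst hn
    rw [hX, hY, LinearMap.add_apply, LinearMap.add_apply, bConv_word, bConv_word]
    congr 1
    refine Finset.sum_congr rfl fun i hi => ?_
    have := Finset.mem_range.1 hi
    rw [ih _ (by rw [List.length_drop]; omega) _ rfl]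

lemma bConv_mul_letter (f : AB R →ₗ[R] AB R) (g : AB R →ₗ[R] M) (u : AB R) (x : Bool) :
    bConv f g (u * word R [x]) =
      bConv f (g ∘ₗ LinearMap.mulRight R (word R [x])) u + (f u * bv R) • g 1 := by
  simp [bConv, Delta_mul_letter, LinearMap.lTensor_comp_apply, bAct_tmul]

end bConv

lemma map_bConv_comp_Delta (f g h : AB R →ₗ[R] AB R) :
    TensorProduct.map (bConv f g) h ∘ₗ Delta R =
      bConv f (TensorProduct.map g h ∘ₗ Delta R) := by
  have map_bAct : TensorProduct.map (bAct (AB R) f ∘ₗ g.lTensor (AB R)) h =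
      bAct (AB R ⊗[R] AB R) f ∘ₗ (TensorProduct.map g h).lTensor (AB R) ∘ₗ
        (TensorProduct.assoc R (AB R) (AB R) (AB R)).toLinearMap :=
    TensorProduct.ext_threefold fun x y z => by simp [bAct_tmul, TensorProduct.smul_tmul']
  calc TensorProduct.map (bConv f g) h ∘ₗ Delta R
      = TensorProduct.map (bAct (AB R) f ∘ₗ g.lTensor (AB R)) h ∘ₗ
          (Delta R).rTensor (AB R) ∘ₗ Delta R := by
        rw [← LinearMap.comp_assoc, LinearMap.map_comp_rTensor]; rfl
    _ = bAct (AB R ⊗[R] AB R) f ∘ₗ (TensorProduct.map g h).lTensor (AB R) ∘ₗ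
          (Delta R).lTensor (AB R) ∘ₗ Delta R := by
        rw [map_bAct, ← Delta_coassoc]; rfl
    _ = bConv f (TensorProduct.map g h ∘ₗ Delta R) := by
        rw [bConv, LinearMap.lTensor_comp]; rfl

lemma Delta_comp_bConv {f : AB R →ₗ[R] AB R} (hf : Delta R ∘ₗ f = 0) (g : AB R →ₗ[R] AB R) :
    Delta R ∘ₗ bConv f g = TensorProduct.map f g ∘ₗ Delta R + bConv f (Delta R ∘ₗ g) := by
  have Delta_mul_bv_mul (x y : AB R) :
      Delta R (f x * bv R * y) = f x ⊗ₜ y + (f x * bv R) • Delta R y := by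
    have hfx : Delta R (f x) = 0 := LinearMap.congr_fun hf x
    simp [Delta_mul, bv, Delta_letter, hfx, TensorProduct.smul_tmul']
  refine linearMap_ext_word fun w => ?_
  simp [bConv_word, Delta_word, Delta_mul_bv_mul, Finset.sum_add_distrib]

theorem Delta_comp_of_eq_add_bConv {f U : AB R →ₗ[R] AB R} (hf : Delta R ∘ₗ f = 0)
    (hU : U = f + bConv f U) :
    Delta R ∘ₗ U = TensorProduct.map U U ∘ₗ Delta R := by
  refine eq_of_eq_add_bConv (f := f) (c := TensorProduct.map f U ∘ₗ Delta R) ?_ ?_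
  · rw [← Delta_comp_bConv hf, ← zero_add (Delta R ∘ₗ bConv f U), ← hf, ← LinearMap.comp_add, ← hU]
  · rw [← map_bConv_comp_Delta, ← LinearMap.add_comp, ← TensorProduct.map_add_left, ← hU]

lemma Delta_comp_nuMap : Delta R ∘ₗ nuMap R = 0 := by
  have Delta_ev : Delta R (ev R) = 0 := by simp [ev, av, bv, Delta_letter]
  have Delta_ev_pow (n : ℕ) : Delta R (ev R ^ n) = 0 := by
    induction n with
    | zero => rw [pow_zero, Delta_one]
    | succ n ih => rw [pow_succ, Delta_mul, ih, Delta_ev, map_zero, smul_zero, add_zero]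
  exact linearMap_ext_word fun w => by simp [nuMap, onBasis_word, Delta_ev_pow]

lemma sum_finset_fin_succ {M : Type*} [AddCommMonoid M] {n : ℕ} (f : Finset (Fin (n + 1)) → M) :
    ∑ S, f S = ∑ S : Finset (Fin n), f (S.map (Fin.succEmb n)) +
      ∑ S : Finset (Fin n), f (insert 0 (S.map (Fin.succEmb n))) := by
  have zero_notMem : (0 : Fin (n + 1)) ∉ Finset.univ.image (Fin.succEmb n) := by simp
  have univ_eq : (Finset.univ : Finset (Fin (n + 1))) =
      insert 0 (Finset.univ.image (Fin.succEmb n)) := by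
    rw [Fin.univ_succ, Finset.cons_eq_insert, Finset.map_eq_image]; rfl
  have image_inj := Finset.image_injective (Fin.succEmb n).injective
  rw [← Finset.powerset_univ, univ_eq, Finset.sum_powerset_insert zero_notMem,
    Finset.powerset_image, Finset.sum_image image_inj.injOn, Finset.sum_image image_inj.injOn,
    Finset.powerset_univ]
  simp only [Finset.map_eq_image]

lemma sort_map_succEmb {n : ℕ} (S : Finset (Fin n)) :
    (S.map (Fin.succEmb n)).sort (· ≤ ·) = (S.sort (· ≤ ·)).map Fin.succ :=
  (Finset.map_sort (Fin.succEmb n) S (· ≤ ·) (· ≤ ·) (by simp)).symm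

/-- The segments into which the word `w` falls when the letters at the positions in `S` are
deleted; the terms of `T(w)` are indexed by these cuts. The bound `n` on the positions is meant to
be the length of `w`; leaving it free avoids casts between `Fin (x :: w).length` and
`Fin (w.length + 1)`. -/
def segmentsAt (w : List Bool) {n : ℕ} (S : Finset (Fin n)) : List (List Bool) :=
  segments w ((S.sort (· ≤ ·)).map Fin.val)

lemma segmentsAt_empty (w : List Bool) (n : ℕ) : segmentsAt w (∅ : Finset (Fin n)) = [w] := by
  simp [segmentsAt, segments]

lemma segmentsAt_ne_nil (w : List Bool) {n : ℕ} (S : Finset (Fin n)) : segmentsAt w S ≠ [] := by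
  rw [segmentsAt]
  cases (S.sort (· ≤ ·)).map Fin.val <;> simp [segments]

lemma segmentsAt_cons_map_succ (x : Bool) (w : List Bool) {n : ℕ} (S : Finset (Fin n)) :
    segmentsAt (x :: w) (S.map (Fin.succEmb n)) = (segmentsAt w S).modifyHead (List.cons x) := by
  have segments_cons_map_succ (l : List ℕ) :
      segments (x :: w) (l.map Nat.succ) = (segments w l).modifyHead (List.cons x) := by
    cases l <;> simp [segments, Function.comp_def]
  rw [segmentsAt, sort_map_succEmb, segmentsAt, ← segments_cons_map_succ]
  simp [Function.comp_def]

lemma segmentsAt_cons_insert_zero (x : Bool) (w : List Bool) {n : ℕ} (S : Finset (Fin n)) :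
    segmentsAt (x :: w) (insert 0 (S.map (Fin.succEmb n))) = [] :: segmentsAt w S := by
  rw [segmentsAt, Finset.sort_insert _ (by simp) (by simp), sort_map_succEmb]
  simp [segmentsAt, segments, Function.comp_def]

lemma sum_segmentsAt {M : Type*} [AddCommMonoid M] (F : List (List Bool) → M) (w : List Bool) :
    ∑ S : Finset (Fin w.length), F (segmentsAt w S) =
      F [w] + ∑ i ∈ Finset.range w.length,
        ∑ S : Finset (Fin (w.drop (i + 1)).length),
          F (w.take i :: segmentsAt (w.drop (i + 1)) S) := by
  induction w generalizing F with
  | nil => simp [Finset.eq_empty_of_isEmpty, segmentsAt_empty]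
  | cons x w ih =>
    rw [List.length_cons, Finset.sum_range_succ', ← add_assoc, sum_finset_fin_succ]
    simp only [segmentsAt_cons_map_succ, segmentsAt_cons_insert_zero]
    rw [ih fun l => F (l.modifyHead (List.cons x))]
    rfl

lemma chainProd_cons {l : List (List Bool)} (hl : l ≠ []) (s : List Bool) :
    chainProd R (s :: l) = nuMap R (word R s) * bv R * chainProd R l := by
  cases l with
  | nil => exact absurd rfl hl
  | cons _ _ => rfl

lemma Tmap_word (w : List Bool) : Tmap R (word R w) =
    ∑ S : Finset (Fin w.length), chainProd R (segmentsAt w S) :=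
  onBasis_word _ _

lemma Tmap_eq_add_bConv : Tmap R = kappa R + bConv (nuMap R) (Tmap R) := by
  refine linearMap_ext_word fun w => ?_
  simp only [LinearMap.add_apply, bConv_word, Tmap_word, smul_eq_mul, Finset.mul_sum]
  rw [sum_segmentsAt]
  simp only [chainProd_cons (segmentsAt_ne_nil _ _)]
  rfl

lemma kappa_word (w : List Bool) : kappa R (word R w) = Amap R (word R w) • ev R ^ w.length :=
  onBasis_word _ _

lemma kappa_mul_av (u : AB R) : kappa R (u * av R) = kappa R u * ev R := by
  have Amap_av : Amap R (av R) = 1 := by simp [Amap, av, word]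
  suffices kappa R ∘ₗ LinearMap.mulRight R (av R) =
      LinearMap.mulRight R (ev R) ∘ₗ kappa R from LinearMap.congr_fun this u
  refine linearMap_ext_word fun w => ?_
  simp only [LinearMap.comp_apply, LinearMap.mulRight_apply, kappa_word, smul_mul_assoc]
  rw [av, word_mul_word, kappa_word, ← word_mul_word, map_mul, ← av, Amap_av, mul_one,
    List.length_append, List.length_singleton, pow_succ]

lemma Tmap_one : Tmap R 1 = 1 := by
  rw [← word_nil, Tmap_eq_add_bConv, LinearMap.add_apply, bConv_word, kappa_word]
  simp [word_nil]

lemma Tmap_mul_av (u : AB R) : Tmap R (u * av R) =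
    kappa R u * ev R + nuMap R u * bv R +
      bConv (nuMap R) (Tmap R ∘ₗ LinearMap.mulRight R (av R)) u := by
  conv_lhs => rw [Tmap_eq_add_bConv, LinearMap.add_apply, kappa_mul_av, av, bConv_mul_letter,
    Tmap_one, smul_eq_mul, mul_one, ← av]
  abel

/-- The constant coefficient of an ab-polynomial, as the algebra map that kills both letters. It
measures how far `H*` is from commuting with left multiplication. -/
def constCoeff (R : Type) [CommRing R] : AB R →ₐ[R] R :=
  MonoidAlgebra.lift R R ABWord (FreeMonoid.lift fun _ => 0)

lemma constCoeff_word_cons (x : Bool) (w : List Bool) : constCoeff R (word R (x :: w)) = 0 := by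
  simp [constCoeff, word]

lemma Hstar_word (w : List Bool) :
    Hstar R (word R w) = if w = [] then 0 else word R w.dropLast :=
  onBasis_word _ _

lemma Hstar_mul (x y : AB R) :
    Hstar R (x * y) = x * Hstar R y + constCoeff R y • Hstar R x := by
  induction x using word_induction with
  | add x₁ x₂ h₁ h₂ =>
    simp only [add_mul, map_add, smul_add, h₁, h₂]
    abel
  | smul r x h => simp only [smul_mul_assoc, map_smul, h, smul_add, smul_comm r]
  | word v =>
    induction y using word_induction with
    | add y₁ y₂ h₁ h₂ =>
      simp only [mul_add, map_add, add_smul, h₁, h₂]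
      abel
    | smul r y h => simp only [mul_smul_comm, map_smul, h, smul_add, smul_assoc]
    | word w =>
      cases w with
      | nil =>
        have Hstar_nil : Hstar R (word R []) = 0 := by simp [Hstar_word]
        rw [Hstar_nil, word_nil, map_one, mul_one, mul_zero, zero_add, one_smul]
      | cons c w =>
        rw [constCoeff_word_cons, zero_smul, add_zero, word_mul_word, Hstar_word, Hstar_word,
          if_neg (by simp), if_neg (by simp), word_mul_word,
          List.dropLast_append_of_ne_nil (by simp)]

lemma Hstar_mul_letter (u : AB R) (x : Bool) : Hstar R (u * word R [x]) = u := by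
  have Hstar_letter : Hstar R (word R [x]) = 1 := by simp [Hstar_word, word_nil]
  simp [Hstar_mul, Hstar_letter, constCoeff_word_cons]

lemma constCoeff_Tmap_mul_av (u : AB R) : constCoeff R (Tmap R (u * av R)) = 0 := by
  have constCoeff_av : constCoeff R (av R) = 0 := constCoeff_word_cons _ _
  have constCoeff_bv : constCoeff R (bv R) = 0 := constCoeff_word_cons _ _
  have constCoeff_bConv (f g : AB R →ₗ[R] AB R) : constCoeff R (bConv f g u) = 0 := by
    suffices (constCoeff R).toLinearMap ∘ₗ bConv f g = 0 from LinearMap.congr_fun this u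
    exact linearMap_ext_word fun w => by simp [bConv_word, constCoeff_bv]
  simp [Tmap_mul_av, constCoeff_bConv, constCoeff_av, constCoeff_bv, ev]

lemma Hstar_comp_bConv (f : AB R →ₗ[R] AB R) {g : AB R →ₗ[R] AB R}
    (hg : ∀ u, constCoeff R (g u) = 0) : Hstar R ∘ₗ bConv f g = bConv f (Hstar R ∘ₗ g) :=
  linearMap_ext_word fun w => by simp [bConv_word, Hstar_mul _ (g _), hg]

lemma Umap_eq_add_bConv : Umap R = nuMap R + bConv (nuMap R) (Umap R) := by
  have Hstar_mul_ev (u : AB R) : Hstar R (u * ev R) = 0 := by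
    rw [ev, mul_sub, map_sub, av, bv, Hstar_mul_letter, Hstar_mul_letter, sub_self]
  refine LinearMap.ext fun u => ?_
  calc Umap R u
      = Hstar R (kappa R u * ev R + nuMap R u * bv R +
          bConv (nuMap R) (Tmap R ∘ₗ LinearMap.mulRight R (av R)) u) :=
        congrArg (Hstar R) (Tmap_mul_av u)
    _ = nuMap R u + (Hstar R ∘ₗ bConv (nuMap R) (Tmap R ∘ₗ LinearMap.mulRight R (av R))) u := by
        rw [map_add, map_add, Hstar_mul_ev, zero_add, bv, Hstar_mul_letter, LinearMap.comp_apply]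
    _ = (nuMap R + bConv (nuMap R) (Umap R)) u := by
        rw [Hstar_comp_bConv (nuMap R) (g := Tmap R ∘ₗ LinearMap.mulRight R (av R))
          constCoeff_Tmap_mul_av, Umap, LinearMap.add_apply]

theorem U_coalgebra_hom_general (R : Type) [CommRing R] :
    Delta R ∘ₗ Umap R = TensorProduct.map (Umap R) (Umap R) ∘ₗ Delta R :=
  Delta_comp_of_eq_add_bConv Delta_comp_nuMap Umap_eq_add_bConv

end CoalgebraHom

theorem U_coalgebra_hom :
    Delta ℤ ∘ₗ Umap ℤ = TensorProduct.map (Umap ℤ) (Umap ℤ) ∘ₗ Delta ℤ :=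
  U_coalgebra_hom_general ℤ

end Tcheb
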